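/- For every n ≥ 3 there is a bijection ψ : NC(n,3) → NC(n,3) such that for all π ∈ NC(n,3): skip(ψ(π)) = leap(π) and leap(ψ(π)) = skip(π); ψ preserves the multiset of block sizes of π; and if a < b ≤ c < d are the elements of the non-singleton blocks of π listed in increasing order (listing the middle element of a size-3 block twice, so that b = c in that case), then the elements of the non-singleton blocks of ψ(π), listed the same way, are d−c, b+d−a−c, d−a, d. -/

import Mathlib

namespace QtN

/-! ### Lattice paths and parallelogram polyominoes -/

/-- A step of a lattice path: east or north. -/
inductive Step : Type
  | E : Step
  | N : Step
  deriving DecidableEq, Repr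

/-- Number of east steps of a path. -/
def countE (w : List Step) : ℕ := w.count Step.E

/-- Number of north steps of a path. -/
def countN (w : List Step) : ℕ := w.count Step.N

/-- Endpoint of a path started at the origin. -/
def pathPos (w : List Step) : ℕ × ℕ := (countE w, countN w)

/-- The set of lattice points visited by a path started at the origin. -/
def pathPts (w : List Step) : Finset (ℕ × ℕ) :=
  ((List.range (w.length + 1)).map (fun i => pathPos (w.take i))).toFinset

/-- `colHeightsAux w h`: for each east step of `w` (in order), the number of north
steps preceding it, starting with `h` north steps already performed. -/
def colHeightsAux : List Step → ℕ → List ℕ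
  | [], _ => []
  | Step.E :: r, h => h :: colHeightsAux r h
  | Step.N :: r, h => colHeightsAux r (h + 1)

/-- Height at which the path `w` crosses the vertical strip `i ≤ x ≤ i + 1`. -/
def colHeight (w : List Step) (i : ℕ) : ℕ := (colHeightsAux w 0).getD i 0

/-- A parallelogram polyomino of size `m × n`: a pair of monotone lattice paths from
`(0,0)` to `(m,n)` (east/north steps), the upper path staying weakly above the lower
path, and the two paths meeting only at `(0,0)` and `(m,n)`. -/
structure Polyomino (m n : ℕ) : Type where
  lower : List Step
  upper : List Step
  lowerE : countE lower = m
  lowerN : countN lower = n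
  upperE : countE upper = m
  upperN : countN upper = n
  above : ∀ i < m, colHeight lower i ≤ colHeight upper i
  meet : pathPts upper ∩ pathPts lower = {(0, 0), (m, n)}

/-- The area statistic: number of unit squares between the two paths,
minus `(m + n - 1)`. -/
def area {m n : ℕ} (P : Polyomino m n) : ℕ :=
  (∑ i ∈ Finset.range m, (colHeight P.upper i - colHeight P.lower i)) - (m + n - 1)

/-- Where an eastward run at height `y`, starting at `x`, first hits the lower path. -/
def eastTarget (hL : ℕ → ℕ) (m x y : ℕ) : ℕ :=
  ((List.range m).filter (fun i => decide (x ≤ i ∧ y ≤ hL i))).headD m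

/-- Total bounce contribution: from state `(x, y)` just after the `j`-th east-to-north
turn (counting the turns made so far), alternately go north until hitting the upper
path and east until hitting the lower path, each step contributing the number of
east-to-north turns preceding it. -/
def bounceAux (hU hL : ℕ → ℕ) (m n : ℕ) : ℕ → ℕ → ℕ → ℕ → ℕ
  | 0, _, _, _ => 0
  | fuel + 1, x, y, j =>
    if x = m ∧ y = n then 0
    else
      let y' := hU (x - 1)
      let x' := if y' = n then m else eastTarget hL m x y'
      (j + 1) * ((y' - y) + (x' - x)) + bounceAux hU hL m n fuel x' y' (j + 1)

/-- The bounce statistic of a parallelogram polyomino: the bounce path starts with a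
single east step (contributing `0`) and then alternates north runs (to the ceiling)
and east runs (to the floor); each step contributes the number of east-to-north turns
preceding it; finally `(m + n - 1)` is subtracted. -/
def bounce {m n : ℕ} (P : Polyomino m n) : ℕ :=
  bounceAux (colHeight P.upper) (colHeight P.lower) m n (m + n + 2) 1 0 0 - (m + n - 1)

/-! ### Set partitions and noncrossing partitions -/

/-- Maximum of a finite set of naturals (`0` for the empty set). -/
def fmax (β : Finset ℕ) : ℕ := β.sup id

/-- Minimum of a finite set of naturals (`0` for the empty set). -/
def fmin (β : Finset ℕ) : ℕ := if h : β.Nonempty then β.min' h else 0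

/-- A set partition of `{1, …, n}`, given by its finite set of blocks. -/
structure SetPartition (n : ℕ) : Type where
  blocks : Finset (Finset ℕ)
  not_empty_mem : ∅ ∉ blocks
  cover : ∀ i : ℕ, i ∈ Finset.Icc 1 n ↔ ∃ β ∈ blocks, i ∈ β
  disjoint : ∀ β ∈ blocks, ∀ γ ∈ blocks, β ≠ γ → Disjoint β γ

/-- A family of blocks is noncrossing if there are no `a < b < c < d` with
`a, c` in one block and `b, d` in a different block. -/
def IsNoncrossing (bs : Finset (Finset ℕ)) : Prop :=
  ∀ a b c d : ℕ, a < b → b < c → c < d →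
    ∀ β ∈ bs, ∀ γ ∈ bs, a ∈ β → c ∈ β → b ∈ γ → d ∈ γ → β = γ

/-- `NC n k`: noncrossing partitions of `{1, …, n}` with exactly `n - k + 1` blocks. -/
abbrev NC (n k : ℕ) : Type :=
  {P : SetPartition n // IsNoncrossing P.blocks ∧ P.blocks.card = n - k + 1}

/-- The skip statistic: `∑_{β} (max β - min β - |β| + 1)`. -/
def skip (bs : Finset (Finset ℕ)) : ℕ :=
  ∑ β ∈ bs, ((fmax β + 1 - fmin β) - β.card)

/-- The non-singleton blocks of a partition. -/
def nsBlocks (bs : Finset (Finset ℕ)) : Finset (Finset ℕ) :=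
  bs.filter (fun β => 2 ≤ β.card)

/-- The block of `bs` containing `x` (junk if there is not exactly one). -/
def blockContaining (bs : Finset (Finset ℕ)) (x : ℕ) : Finset ℕ :=
  (bs.filter (fun β => x ∈ β)).sup id

/-- For a noncrossing partition in `NC n 3`, the quadruple `(a, b, c, d)` describing its
non-singleton blocks: for two pair blocks `{a,b}` and `{c,d}` (with `a` the global
minimum) this is `(a, b, c, d)`; for a single triple block `{a, b, c}` (`a < b < c`)
this is `(a, b, b, c)`. -/
def blockQuad (bs : Finset (Finset ℕ)) : ℕ × ℕ × ℕ × ℕ :=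
  let A := blockContaining (nsBlocks bs) (fmin ((nsBlocks bs).sup id))
  if (nsBlocks bs).card = 1 then
    let l := A.sort (· ≤ ·)
    (l.getD 0 0, l.getD 1 0, l.getD 1 0, l.getD 2 0)
  else
    let B := ((nsBlocks bs).erase A).sup id
    (fmin A, fmax A, fmin B, fmax B)

/-- The leap statistic on `NC n 3`: `leap(ab|cd) = c - 2 + max(0, c - b)`,
and `leap({a,b,c}) = b - 2` (the case `b = c`). -/
def leap (bs : Finset (Finset ℕ)) : ℕ :=
  let (_, b, c, _) := blockQuad bs
  (c - 2) + (c - b)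

/-- The skew statistic on `NC n 3`: `skew(ab|cd) = c - 2 + a` if `b < c`, else `c - 2`;
`skew({a,b,c}) = b - 2` (the case `b = c`). -/
def skew (bs : Finset (Finset ℕ)) : ℕ :=
  let (a, b, c, _) := blockQuad bs
  if b < c then c - 2 + a else c - 2

/-- The mag statistic on `NC n 3`: `mag(ab|cd) = a + max(b, c) - 2 - ⌈(b - a)/2⌉`,
and `mag({a,b,c}) = a + b - 2 - ⌈(b - a)/2⌉` (the case `b = c`). -/
def mag (bs : Finset (Finset ℕ)) : ℕ :=
  let (a, b, c, _) := blockQuad bs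
  a + max b c - 2 - (b - a + 1) / 2

/-- The area statistic on noncrossing partitions:
`area(π) = ∑_{β, β' ∈ π} #{ i ∈ β' : i < max β < max β' }` (ordered pairs of blocks). -/
def ncArea (bs : Finset (Finset ℕ)) : ℕ :=
  ∑ β ∈ bs, ∑ γ ∈ bs, (γ.filter (fun i => i < fmax β ∧ fmax β < fmax γ)).card

/-- The elements of the non-singleton blocks, listed in increasing order, with
the middle element of a size-3 block listed twice. -/
def nsList (bs : Finset (Finset ℕ)) : List ℕ :=
  let l := ((nsBlocks bs).sup id).sort (· ≤ ·)
  if l.length = 3 then [l.getD 0 0, l.getD 1 0, l.getD 1 0, l.getD 2 0] else l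

/-- The multiset of block sizes of a partition. -/
def blockSizes (bs : Finset (Finset ℕ)) : Multiset ℕ := bs.val.map Finset.card

/-- The image of a partition of `{1, …, n}` under the flip `i ↦ n + 1 - i`. -/
def flipBlocks (n : ℕ) (bs : Finset (Finset ℕ)) : Finset (Finset ℕ) :=
  bs.image (fun β => β.image (fun i => n + 1 - i))

/-! ### The mingarc statistic -/

/-- The gaps `ν_r = m_{r+1} - m_r - 1` between consecutive block minima
`m_1 < ⋯ < m_h` (with `m_{h+1} = n + 1`). -/
def nuList (n : ℕ) (bs : Finset (Finset ℕ)) : List ℕ :=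
  let ms := ((bs.image fmin).sort (· ≤ ·)) ++ [n + 1]
  (List.range (bs.image fmin).card).map (fun r => ms.getD (r + 1) 0 - ms.getD r 0 - 1)

/-- Concatenation of `replicate ν c` over a list of pairs `(c, ν)`. -/
def repeatEach : List (ℕ × ℕ) → List ℕ
  | [] => []
  | p :: r => List.replicate p.2 p.1 ++ repeatEach r

/-- The right endpoints `y_1 ≤ ⋯ ≤ y_{k-1}`: each block maximum `c_r` repeated
`ν_r` times, in increasing order. -/
def ysList (n : ℕ) (bs : Finset (Finset ℕ)) : List ℕ :=
  repeatEach (List.zip ((bs.image fmax).sort (· ≤ ·)) (nuList n bs))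

/-- The left endpoints `x_1 < ⋯ < x_{k-1}`: the elements of `{1, …, n}` that are not
block maxima, in increasing order. -/
def xsList (n : ℕ) (bs : Finset (Finset ℕ)) : List ℕ :=
  ((Finset.Icc 1 n).filter (fun i => i ∉ bs.image fmax)).sort (· ≤ ·)

/-- Greedy left-to-right selection of arcs: keep the first arc, and thereafter keep the
earliest arc whose left endpoint exceeds the right endpoint of the last kept arc. -/
def greedyArcs : List (ℕ × ℕ) → Option ℕ → List (ℕ × ℕ)
  | [], _ => []
  | a :: rest, none => a :: greedyArcs rest (some a.2)
  | a :: rest, some r =>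
      if r < a.1 then a :: greedyArcs rest (some a.2) else greedyArcs rest (some r)

/-- The mingarc statistic: the sum of `n - y_i` over the greedily selected
candidate arcs `[x_i, y_i]`. -/
def mingarc (n : ℕ) (bs : Finset (Finset ℕ)) : ℕ :=
  ((greedyArcs (List.zip (xsList n bs) (ysList n bs)) none).map (fun p => n - p.2)).sum

/-! ### The map η from polyominoes to noncrossing partitions -/

/-- Largest column index `i < m` with `colHeight lower i ≤ j`: the rightmost cell
adjacent to the floor in row `j`. -/
def eFloor {m k : ℕ} (P : Polyomino m k) (j : ℕ) : ℕ :=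
  (((List.range m).filter (fun i => decide (colHeight P.lower i ≤ j))).getLastD 0)

/-- Smallest column index `i` with `colHeight upper i ≥ j + 1`: the leftmost cell
adjacent to the ceiling in row `j` (with default `m - 1`). -/
def fCeil {m k : ℕ} (P : Polyomino m k) (j : ℕ) : ℕ :=
  (((List.range m).filter (fun i => decide (j + 1 ≤ colHeight P.upper i))).headD (m - 1))

/-- The number of cells adjacent to the ceiling in row `j`. -/
def rowCount {m k : ℕ} (P : Polyomino m k) (j : ℕ) : ℕ :=
  fCeil P (j + 1) - fCeil P j + 1

/-- Pick, `cnt` times, the largest label in `{1, …, L}` not used yet. -/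
def pickRow : ℕ → ℕ → Finset ℕ → Finset ℕ
  | 0, _, _ => ∅
  | cnt + 1, L, used =>
      let x := fmax ((Finset.Icc 1 L) \ used)
      insert x (pickRow cnt L (insert x used))

/-- The blocks of `η(P)`: label the cells adjacent to the floor `1, …, n` going bottom
to top, left to right (the label of the floor cell in column `i`, row `j` is
`i + j + 1`, and the labels present in rows `≤ j` are exactly `1, …, eFloor P j + j + 1`);
then going bottom to top, left to right over the cells adjacent to the ceiling, assign
to each the largest unused indexing label occurring in the same row or below; the
blocks are the label sets of the ceiling rows. -/
def etaBlocks {m k : ℕ} (P : Polyomino m k) : Finset (Finset ℕ) :=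
  (((List.range k).foldl
      (fun st j =>
        let B := pickRow (rowCount P j) (eFloor P j + j + 1) st.1
        (st.1 ∪ B, B :: st.2))
      ((∅ : Finset ℕ), ([] : List (Finset ℕ)))).2).toFinset

/-!
A partition is determined by its non-singleton blocks, and all the statistics involved can be read
off from these blocks alone. For `π ∈ NC(n,3)` the sum of `|β| - 1` over the blocks is `2`, so the
non-singleton blocks are either a triple `{a,b,d}` or two pairs on `a < b < c < d`, and the
noncrossing condition leaves only the arrangements `ab|cd` and `ad|bc`. The bijection exchanges
these two arrangements while moving `(a,b,c,d)` to `(d-c, b+d-a-c, d-a, d)`, that is, replacing the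
distances `(a, b-a, c-b, d-c)` from `0` to `a`, …, `d` by `(d-c, b-a, c-b, a)`; it is an involution.
For `ab|cd` skip is `(b-a) + (d-c) - 2` and leap is `(c-2) + (c-b)`; for `ad|bc` skip is
`(d-a) + (c-b) - 2` and leap is `b-2`. A triple is the degenerate case `b = c` of both arrangements,
for which the two pairs of formulas agree.
-/

open Finset

/-! ### Families of blocks -/

theorem fmin_singleton (a : ℕ) : fmin {a} = a := by
  simp [fmin]

theorem fmin_insert (a : ℕ) {s : Finset ℕ} (hs : s.Nonempty) :
    fmin (insert a s) = min a (fmin s) := by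
  simp [fmin, hs]

theorem fmax_singleton (a : ℕ) : fmax {a} = a := by
  simp [fmax]

theorem fmax_insert (a : ℕ) (s : Finset ℕ) : fmax (insert a s) = max a (fmax s) := by
  simp [fmax]

theorem card_eq_one_of_notMem_nsBlocks {bs : Finset (Finset ℕ)} (h : ∅ ∉ bs) {β : Finset ℕ}
    (hβ : β ∈ bs) (hβ' : β ∉ nsBlocks bs) : #β = 1 := by
  have hpos : 0 < #β := card_pos.2 (nonempty_iff_ne_empty.2 (ne_of_mem_of_not_mem hβ h))
  have hlt : #β < 2 := by simpa [nsBlocks, hβ] using hβ'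
  omega

theorem nsBlocks_eq_self {bs : Finset (Finset ℕ)} (h : ∀ β ∈ bs, 2 ≤ #β) : nsBlocks bs = bs :=
  filter_eq_self.2 h

theorem nsBlocks_nsBlocks (bs : Finset (Finset ℕ)) : nsBlocks (nsBlocks bs) = nsBlocks bs :=
  nsBlocks_eq_self fun _ hβ => (mem_filter.1 hβ).2

theorem nsList_nsBlocks (bs : Finset (Finset ℕ)) : nsList (nsBlocks bs) = nsList bs := by
  simp only [nsList, nsBlocks_nsBlocks]

theorem leap_nsBlocks (bs : Finset (Finset ℕ)) : leap (nsBlocks bs) = leap bs := by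
  simp only [leap, blockQuad, nsBlocks_nsBlocks]

theorem skip_nsBlocks {bs : Finset (Finset ℕ)} (h : ∅ ∉ bs) : skip (nsBlocks bs) = skip bs := by
  refine sum_subset (filter_subset _ _) fun β hβ hβ' => ?_
  obtain ⟨x, rfl⟩ := card_eq_one.1 (card_eq_one_of_notMem_nsBlocks h hβ hβ')
  simp [fmin_singleton, fmax_singleton]

theorem blockSizes_eq_add_replicate {bs : Finset (Finset ℕ)} (h : ∅ ∉ bs) :
    blockSizes bs =
      blockSizes (nsBlocks bs) + Multiset.replicate (#bs - #(nsBlocks bs)) 1 := by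
  have hsplit : nsBlocks bs ∪ (bs \ nsBlocks bs) = bs := union_sdiff_of_subset (filter_subset _ _)
  have hsingle : blockSizes (bs \ nsBlocks bs) = Multiset.replicate (#(bs \ nsBlocks bs)) 1 := by
    refine Multiset.eq_replicate.2 ⟨Multiset.card_map _ _, fun k hk => ?_⟩
    obtain ⟨β, hβ, rfl⟩ := Multiset.mem_map.1 hk
    obtain ⟨hβ, hβ'⟩ := mem_sdiff.1 hβ
    exact card_eq_one_of_notMem_nsBlocks h hβ hβ'
  have hadd : blockSizes bs = blockSizes (nsBlocks bs) + blockSizes (bs \ nsBlocks bs) := by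
    rw [blockSizes, blockSizes, blockSizes, ← Multiset.map_add, ← disjUnion_val _ _ disjoint_sdiff,
      disjUnion_eq_union, hsplit]
  rw [hadd, hsingle, card_sdiff_of_subset (show nsBlocks bs ⊆ bs from filter_subset _ _)]

theorem isNoncrossing_nsBlocks {bs : Finset (Finset ℕ)} :
    IsNoncrossing (nsBlocks bs) ↔ IsNoncrossing bs := by
  have mem_of_lt {β : Finset ℕ} (hβ : β ∈ bs) {x y : ℕ} (hx : x ∈ β) (hy : y ∈ β) (hxy : x < y) :
      β ∈ nsBlocks bs :=
    mem_filter.2 ⟨hβ, one_lt_card.2 ⟨x, hx, y, hy, hxy.ne⟩⟩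
  constructor
  · intro h a b c d hab hbc hcd β hβ γ hγ ha hc hb hd
    exact h a b c d hab hbc hcd β (mem_of_lt hβ ha hc (hab.trans hbc)) γ
      (mem_of_lt hγ hb hd (hbc.trans hcd)) ha hc hb hd
  · intro h a b c d hab hbc hcd β hβ γ hγ
    exact h a b c d hab hbc hcd β (mem_filter.1 hβ).1 γ (mem_filter.1 hγ).1

/-- The excess `∑ (|β| - 1)` of a family of blocks: the amount by which the size of the ground set
of a partition exceeds its number of blocks. -/
def excess (bs : Finset (Finset ℕ)) : ℕ := ∑ β ∈ bs, (#β - 1)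

theorem excess_nsBlocks (bs : Finset (Finset ℕ)) : excess (nsBlocks bs) = excess bs := by
  refine sum_subset (filter_subset _ _) fun β hβ hβ' => ?_
  have hlt : #β < 2 := by simpa [nsBlocks, hβ] using hβ'
  omega

theorem excess_eq_sum_blockSizes (bs : Finset (Finset ℕ)) :
    excess bs = ((blockSizes bs).map (· - 1)).sum := by
  rw [blockSizes, Multiset.map_map]
  rfl

theorem eq_singleton_or_eq_pair_of_excess_eq_two {bs : Finset (Finset ℕ)}
    (h2 : ∀ β ∈ bs, 2 ≤ #β) (hbs : excess bs = 2) :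
    (∃ β, bs = {β} ∧ #β = 3) ∨ ∃ β γ, β ≠ γ ∧ bs = {β, γ} ∧ #β = 2 ∧ #γ = 2 := by
  have hle : #bs ≤ 2 := by
    rw [← hbs, card_eq_sum_ones]
    exact sum_le_sum fun β hβ => Nat.le_sub_one_of_lt (h2 β hβ)
  have hpos : #bs ≠ 0 := by
    rintro h
    simp [card_eq_zero.1 h, excess] at hbs
  obtain hcard | hcard : #bs = 1 ∨ #bs = 2 := by omega
  · obtain ⟨β, rfl⟩ := card_eq_one.1 hcard
    rw [excess, sum_singleton] at hbs
    exact .inl ⟨β, rfl, by omega⟩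
  · obtain ⟨β, γ, hne, rfl⟩ := card_eq_two.1 hcard
    rw [excess, sum_pair hne] at hbs
    have hβ := h2 β (by simp)
    have hγ := h2 γ (by simp)
    exact .inr ⟨β, γ, hne, rfl, by omega, by omega⟩

theorem exists_lt_eq_of_card_eq_two {α : Type*} [LinearOrder α] {s : Finset α} (hs : #s = 2) :
    ∃ a b, a < b ∧ s = {a, b} := by
  obtain ⟨a, b, hne, rfl⟩ := card_eq_two.1 hs
  obtain hab | hba := hne.lt_or_gt
  · exact ⟨a, b, hab, rfl⟩
  · exact ⟨b, a, hba, pair_comm a b⟩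

theorem exists_lt_lt_eq_of_card_eq_three {α : Type*} [LinearOrder α] {s : Finset α}
    (hs : #s = 3) : ∃ a b c, a < b ∧ b < c ∧ s = {a, b, c} := by
  have hlt := s.sortedLT_sort.pairwise
  have heq := s.sort_toFinset (· ≤ ·)
  obtain ⟨a, b, c, habc⟩ := List.length_eq_three.1 ((s.length_sort (· ≤ ·)).trans hs)
  rw [habc] at hlt heq
  have hab : a < b := List.rel_of_pairwise_cons hlt (by simp)
  have hbc : b < c := List.rel_of_pairwise_cons hlt.of_cons (by simp)
  exact ⟨a, b, c, hab, hbc, by simpa using heq.symm⟩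

/-! ### Partitions with prescribed non-singleton blocks -/

/-- The family obtained from `bs` by adding the points of `{1, …, n}` outside all its blocks as
singletons. It recovers a partition from its non-singleton blocks. -/
def addSingletons (n : ℕ) (bs : Finset (Finset ℕ)) : Finset (Finset ℕ) :=
  bs ∪ (Icc 1 n \ bs.sup id).image singleton

theorem mem_addSingletons {n : ℕ} {bs : Finset (Finset ℕ)} {β : Finset ℕ} :
    β ∈ addSingletons n bs ↔
      β ∈ bs ∨ ∃ x ∈ Icc 1 n, (∀ γ ∈ bs, x ∉ γ) ∧ β = {x} := by
  simp [addSingletons, and_assoc, eq_comm]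

theorem nsBlocks_addSingletons (n : ℕ) (bs : Finset (Finset ℕ)) :
    nsBlocks (addSingletons n bs) = nsBlocks bs := by
  ext β
  simp only [nsBlocks, mem_filter, mem_addSingletons]
  constructor
  · rintro ⟨hβ | ⟨x, -, -, rfl⟩, hcard⟩
    · exact ⟨hβ, hcard⟩
    · simp at hcard
  · exact fun ⟨hβ, hcard⟩ => ⟨.inl hβ, hcard⟩

namespace SetPartition

variable {n : ℕ}

theorem subset_Icc (P : SetPartition n) {β : Finset ℕ} (hβ : β ∈ P.blocks) : β ⊆ Icc 1 n :=
  fun i hi => (P.cover i).2 ⟨β, hβ, hi⟩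

theorem blocks_injective : Function.Injective (blocks (n := n)) := by
  rintro ⟨_, _, _, _⟩ ⟨_, _, _, _⟩ h
  cases h
  rfl

theorem addSingletons_nsBlocks (P : SetPartition n) :
    addSingletons n (nsBlocks P.blocks) = P.blocks := by
  ext β
  rw [mem_addSingletons]
  constructor
  · rintro (hβ | ⟨x, hx, hns, rfl⟩)
    · exact (mem_filter.1 hβ).1
    · obtain ⟨γ, hγ, hxγ⟩ := (P.cover x).1 hx
      have hcard := card_eq_one_of_notMem_nsBlocks P.not_empty_mem hγ fun h => hns γ h hxγ
      rwa [← eq_singleton_iff_unique_mem.2 ⟨hxγ, fun y hy => card_le_one.1 hcard.le y hy x hxγ⟩]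
  · intro hβ
    by_cases hns : β ∈ nsBlocks P.blocks
    · exact .inl hns
    · obtain ⟨x, rfl⟩ := card_eq_one.1 (card_eq_one_of_notMem_nsBlocks P.not_empty_mem hβ hns)
      refine .inr ⟨x, P.subset_Icc hβ (mem_singleton_self x), fun γ hγ hxγ => ?_, rfl⟩
      have hne : {x} ≠ γ := by rintro rfl; exact hns hγ
      simpa [hxγ] using P.disjoint _ hβ _ (mem_filter.1 hγ).1 hne

theorem nsBlocks_injective : Function.Injective fun P : SetPartition n => nsBlocks P.blocks := by
  intro P Q h
  apply blocks_injective
  rw [← P.addSingletons_nsBlocks, ← Q.addSingletons_nsBlocks, show nsBlocks P.blocks = _ from h]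

theorem card_blocks_add_excess (P : SetPartition n) : #P.blocks + excess P.blocks = n := by
  have hpos : ∀ β ∈ P.blocks, 1 ≤ #β := fun β hβ =>
    card_pos.2 (nonempty_iff_ne_empty.2 (ne_of_mem_of_not_mem hβ P.not_empty_mem))
  have hunion : P.blocks.biUnion id = Icc 1 n := by
    ext i
    simp [P.cover i]
  calc #P.blocks + excess P.blocks = ∑ β ∈ P.blocks, #β := by
        rw [excess, card_eq_sum_ones, ← sum_add_distrib]
        exact sum_congr rfl fun β hβ => Nat.add_sub_cancel' (hpos β hβ)
    _ = #(P.blocks.biUnion id) := (card_biUnion (t := id) P.disjoint).symm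
    _ = n := by rw [hunion, Nat.card_Icc, Nat.add_sub_cancel]

/-- The set partition of `{1, …, n}` whose blocks are those of `bs` together with singletons. -/
def ofBlocks (bs : Finset (Finset ℕ)) (hne : ∅ ∉ bs) (hsub : ∀ β ∈ bs, β ⊆ Icc 1 n)
    (hdisj : (bs : Set (Finset ℕ)).PairwiseDisjoint id) : SetPartition n where
  blocks := addSingletons n bs
  not_empty_mem h := by
    obtain h | ⟨x, -, -, h⟩ := mem_addSingletons.1 h
    · exact hne h
    · exact singleton_ne_empty x h.symm
  cover i := by
    constructor
    · intro hi
      by_cases h : ∃ β ∈ bs, i ∈ β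
      · obtain ⟨β, hβ, hiβ⟩ := h
        exact ⟨β, mem_addSingletons.2 (.inl hβ), hiβ⟩
      · push Not at h
        exact ⟨{i}, mem_addSingletons.2 (.inr ⟨i, hi, h, rfl⟩), mem_singleton_self i⟩
    · rintro ⟨β, hβ, hi⟩
      obtain hβ | ⟨x, hx, -, rfl⟩ := mem_addSingletons.1 hβ
      · exact hsub β hβ hi
      · rwa [mem_singleton.1 hi]
  disjoint β hβ γ hγ hβγ := by
    obtain hβ | ⟨x, -, hx, rfl⟩ := mem_addSingletons.1 hβ <;>
      obtain hγ | ⟨y, -, hy, rfl⟩ := mem_addSingletons.1 hγ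
    · exact hdisj hβ hγ hβγ
    · exact disjoint_singleton_right.2 (hy β hβ)
    · exact disjoint_singleton_left.2 (hx γ hγ)
    · simpa using hβγ

end SetPartition

theorem excess_nsBlocks_eq_two {n : ℕ} (hn : 3 ≤ n) (π : NC n 3) :
    excess (nsBlocks π.val.blocks) = 2 := by
  have hsum := π.val.card_blocks_add_excess
  rw [π.prop.2] at hsum
  rw [excess_nsBlocks]
  omega

/-! ### Statistics of a triple and of two pairs -/

theorem blockContaining_eq {bs : Finset (Finset ℕ)} {β : Finset ℕ} {x : ℕ} (hβ : β ∈ bs)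
    (hx : x ∈ β) (h : ∀ γ ∈ bs, x ∈ γ → γ = β) : blockContaining bs x = β := by
  have hfilter : {γ ∈ bs | x ∈ γ} = {β} := by
    ext γ
    rw [mem_filter, mem_singleton]
    exact ⟨fun hγ => h γ hγ.1 hγ.2, by rintro rfl; exact ⟨hβ, hx⟩⟩
  rw [blockContaining, hfilter, sup_singleton, id]

theorem sort_toFinset_of_sortedLT {l : List ℕ} (hl : l.SortedLT) : l.toFinset.sort (· ≤ ·) = l :=
  (List.toFinset_sort (· ≤ ·) hl.nodup).2 hl.sortedLE.pairwise

theorem card_triple {a b c : ℕ} (hab : a < b) (hbc : b < c) : #{a, b, c} = 3 :=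
  card_eq_three.2 ⟨a, b, c, hab.ne, (hab.trans hbc).ne, hbc.ne, rfl⟩

theorem sort_triple {a b c : ℕ} (hab : a < b) (hbc : b < c) :
    ({a, b, c} : Finset ℕ).sort (· ≤ ·) = [a, b, c] := by
  have hl : [a, b, c].SortedLT := List.Pairwise.sortedLT (by simp; omega)
  simpa using sort_toFinset_of_sortedLT hl

theorem pair_ne_pair {a b c d : ℕ} (hac : a ≠ c) (had : a ≠ d) :
    ({a, b} : Finset ℕ) ≠ {c, d} := by
  intro h
  have ha : a ∈ ({c, d} : Finset ℕ) := h ▸ mem_insert_self a {b}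
  simp [hac, had] at ha

theorem blockQuad_triple {a b c : ℕ} (hab : a < b) (hbc : b < c) :
    blockQuad {{a, b, c}} = (a, b, b, c) := by
  have hns : nsBlocks {{a, b, c}} = {{a, b, c}} := nsBlocks_eq_self (by simp [card_triple hab hbc])
  have hmin : fmin {a, b, c} = a := by
    simp only [fmin_insert, fmin_singleton, insert_nonempty, singleton_nonempty]
    omega
  have hA : blockContaining {{a, b, c}} a = {a, b, c} :=
    blockContaining_eq (by simp) (by simp) (by simp)
  simp [blockQuad, hns, hmin, hA, sort_triple hab hbc]

theorem blockQuad_pair {a b c d : ℕ} (hab : a < b) (hac : a < c) (hcd : c < d) :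
    blockQuad {{a, b}, {c, d}} = (a, b, c, d) := by
  have hne : ({a, b} : Finset ℕ) ≠ {c, d} := pair_ne_pair (by omega) (by omega)
  have hns : nsBlocks {{a, b}, {c, d}} = {{a, b}, {c, d}} :=
    nsBlocks_eq_self (by simp [hab.ne, hcd.ne])
  have hmin : fmin (({{a, b}, {c, d}} : Finset (Finset ℕ)).sup id) = a := by
    simp only [sup_insert, sup_singleton, id, sup_eq_union, insert_union, singleton_union,
      insert_nonempty, singleton_nonempty, fmin_insert, fmin_singleton]
    omega
  have hA : blockContaining {{a, b}, {c, d}} a = {a, b} :=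
    blockContaining_eq (by simp) (by simp) (by simp; omega)
  have hB : ({{a, b}, {c, d}} : Finset (Finset ℕ)).erase {a, b} = {{c, d}} :=
    erase_insert (by simpa using hne)
  simp only [blockQuad, hns, hmin, hA, hB, card_pair hne]
  simp [fmin_insert, fmin_singleton, fmax_insert, fmax_singleton, hab.le, hcd.le]

theorem skip_triple {a b c : ℕ} (hab : a < b) (hbc : b < c) : skip {{a, b, c}} = c - a - 2 := by
  rw [skip, sum_singleton, card_triple hab hbc]
  simp only [fmin_insert, insert_nonempty, singleton_nonempty, fmin_singleton, fmax_insert,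
    fmax_singleton]
  omega

theorem skip_pair {a b c d : ℕ} (hab : a < b) (hcd : c < d) (hac : a ≠ c) (had : a ≠ d) :
    skip {{a, b}, {c, d}} = (b - a - 1) + (d - c - 1) := by
  rw [skip, sum_pair (pair_ne_pair hac had), card_pair hab.ne, card_pair hcd.ne]
  simp only [fmin_insert, singleton_nonempty, fmin_singleton, fmax_insert, fmax_singleton]
  omega

theorem blockSizes_pair {β γ : Finset ℕ} (h : β ≠ γ) : blockSizes {β, γ} = {#β, #γ} := by
  simp [blockSizes, h]

/-! ### Configurations of non-singleton blocks -/

/-- The three possible arrangements of the non-singleton blocks of an element of `NC(n,3)`. -/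
inductive Shape : Type
  | triple
  | disjoint
  | nested

namespace Shape

/-- The effect of the bijection on arrangements. -/
def dual : Shape → Shape
  | triple => triple
  | disjoint => nested
  | nested => disjoint

/-- The sizes of the blocks in a given arrangement. -/
def sizes : Shape → Multiset ℕ
  | triple => {3}
  | disjoint => {2, 2}
  | nested => {2, 2}

theorem dual_dual (s : Shape) : s.dual.dual = s := by
  cases s <;> rfl

theorem dual_eq_triple_iff {s : Shape} : s.dual = triple ↔ s = triple := by
  cases s <;> simp [dual]

theorem sizes_dual (s : Shape) : s.dual.sizes = s.sizes := by
  cases s <;> rfl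

end Shape

/-- The data `a < b ≤ c < d` and the arrangement of the non-singleton blocks of an element of
`NC(n,3)`. As in the statistics, `b = c` encodes the middle element of a triple. -/
@[ext]
structure Config (n : ℕ) : Type where
  shape : Shape
  a : ℕ
  b : ℕ
  c : ℕ
  d : ℕ
  one_le_a : 1 ≤ a
  a_lt_b : a < b
  b_le_c : b ≤ c
  c_lt_d : c < d
  d_le_n : d ≤ n
  shape_eq_triple_iff : shape = Shape.triple ↔ b = c

namespace Config

variable {n : ℕ}

/-- The blocks described by a configuration. -/
def blocks (q : Config n) : Finset (Finset ℕ) :=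
  match q.shape with
  | .triple => {{q.a, q.b, q.d}}
  | .disjoint => {{q.a, q.b}, {q.c, q.d}}
  | .nested => {{q.a, q.d}, {q.b, q.c}}

/-- The bijection of the theorem, on configurations. -/
def dual (q : Config n) : Config n where
  shape := q.shape.dual
  a := q.d - q.c
  b := q.b + q.d - q.a - q.c
  c := q.d - q.a
  d := q.d
  one_le_a := Nat.sub_pos_of_lt q.c_lt_d
  a_lt_b := by
    have hab := q.a_lt_b
    have hcd := q.c_lt_d
    omega
  b_le_c := by
    have hbc := q.b_le_c
    omega
  c_lt_d := Nat.sub_lt (q.a.zero_le.trans_lt <| q.a_lt_b.trans_le q.b_le_c |>.trans q.c_lt_d)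
    q.one_le_a
  d_le_n := q.d_le_n
  shape_eq_triple_iff := by
    have hab := q.a_lt_b
    have hbc := q.b_le_c
    have hcd := q.c_lt_d
    rw [Shape.dual_eq_triple_iff, q.shape_eq_triple_iff]
    omega

theorem dual_involutive : Function.Involutive (dual : Config n → Config n) := by
  intro q
  have hab := q.a_lt_b
  have hbc := q.b_le_c
  have hcd := q.c_lt_d
  ext1
  · exact Shape.dual_dual _
  all_goals simp only [dual] <;> omega

theorem blocks_subset_Icc (q : Config n) : ∀ β ∈ q.blocks, β ⊆ Icc 1 n := by
  obtain ⟨shape, a, b, c, d, ha, hab, hbc, hcd, hd, -⟩ := q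
  cases shape <;>
    simp only [blocks, mem_insert, mem_singleton, forall_eq_or_imp, forall_eq, insert_subset_iff,
      singleton_subset_iff, mem_Icc] <;> omega

theorem blocks_pairwiseDisjoint (q : Config n) :
    (q.blocks : Set (Finset ℕ)).PairwiseDisjoint id := by
  obtain ⟨shape, a, b, c, d, ha, hab, hbc, hcd, hd, hshape⟩ := q
  cases shape <;>
    simp only [blocks, coe_insert, coe_singleton, Set.pairwiseDisjoint_insert,
      Set.pairwiseDisjoint_singleton, Set.mem_singleton_iff, forall_eq, id, disjoint_insert_left,
      disjoint_singleton_left, mem_insert, mem_singleton] <;> grind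

theorem blocks_isNoncrossing (q : Config n) : IsNoncrossing q.blocks := by
  obtain ⟨shape, a, b, c, d, ha, hab, hbc, hcd, hd, hshape⟩ := q
  intro x y z w hxy hyz hzw β hβ γ hγ hx hz hy hw
  cases shape <;> simp only [blocks, mem_insert, mem_singleton] at hβ hγ <;> grind

theorem b_lt_c {q : Config n} (h : q.shape ≠ .triple) : q.b < q.c :=
  lt_of_le_of_ne q.b_le_c fun hbc => h (q.shape_eq_triple_iff.2 hbc)

theorem blockSizes_blocks (q : Config n) : blockSizes q.blocks = q.shape.sizes := by
  have hab := q.a_lt_b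
  have hbc := q.b_le_c
  have hcd := q.c_lt_d
  cases h : q.shape <;> simp only [blocks, h, Shape.sizes]
  case triple =>
    rw [blockSizes, singleton_val, Multiset.map_singleton, card_triple hab (by omega)]
  case disjoint =>
    rw [blockSizes_pair (pair_ne_pair (by omega) (by omega)), card_pair (by omega),
      card_pair (by omega)]
  case nested =>
    have hlt := b_lt_c (q := q) (by simp [h])
    rw [blockSizes_pair (pair_ne_pair (by omega) (by omega)), card_pair (by omega),
      card_pair (by omega)]

theorem two_le_card {q : Config n} {β : Finset ℕ} (hβ : β ∈ q.blocks) : 2 ≤ #β := by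
  have hmem : #β ∈ q.shape.sizes := q.blockSizes_blocks ▸ Multiset.mem_map_of_mem card hβ
  cases h : q.shape <;>
    simp only [h, Shape.sizes, Multiset.insert_eq_cons, Multiset.mem_cons,
      Multiset.mem_singleton] at hmem <;> omega

theorem empty_notMem_blocks (q : Config n) : ∅ ∉ q.blocks :=
  fun h => by simpa using two_le_card h

theorem nsBlocks_blocks (q : Config n) : nsBlocks q.blocks = q.blocks :=
  nsBlocks_eq_self fun _ => two_le_card

theorem excess_blocks (q : Config n) : excess q.blocks = 2 := by
  rw [excess_eq_sum_blockSizes, blockSizes_blocks]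
  cases q.shape <;> rfl

theorem sup_blocks (q : Config n) : q.blocks.sup id = {q.a, q.b, q.c, q.d} := by
  obtain ⟨shape, a, b, c, d, ha, hab, hbc, hcd, hd, hshape⟩ := q
  cases shape
  case triple =>
    obtain rfl : b = c := hshape.1 rfl
    simp [blocks]
  all_goals
    ext x
    simp only [blocks, sup_insert, sup_singleton, id, sup_eq_union, mem_union, mem_insert,
      mem_singleton]
    tauto

theorem nsList_blocks (q : Config n) : nsList q.blocks = [q.a, q.b, q.c, q.d] := by
  have hab := q.a_lt_b
  have hcd := q.c_lt_d
  obtain hbc | hbc := q.b_le_c.eq_or_lt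
  · rw [hbc] at hab
    simp [nsList, nsBlocks_blocks, sup_blocks, hbc, sort_triple hab hcd]
  · have hl : [q.a, q.b, q.c, q.d].SortedLT := List.Pairwise.sortedLT (by simp; omega)
    have hsort : ({q.a, q.b, q.c, q.d} : Finset ℕ).sort (· ≤ ·) = [q.a, q.b, q.c, q.d] := by
      simpa using sort_toFinset_of_sortedLT hl
    simp [nsList, nsBlocks_blocks, sup_blocks, hsort]

theorem blockQuad_blocks (q : Config n) :
    blockQuad q.blocks =
      match q.shape with
      | .nested => (q.a, q.d, q.b, q.c)
      | _ => (q.a, q.b, q.c, q.d) := by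
  have hab := q.a_lt_b
  have hbc := q.b_le_c
  have hcd := q.c_lt_d
  cases h : q.shape <;> simp only [blocks, h]
  case triple =>
    rw [← q.shape_eq_triple_iff.1 h]
    exact blockQuad_triple hab (by omega)
  case disjoint => exact blockQuad_pair hab (by omega) hcd
  case nested => exact blockQuad_pair (by omega) hab (b_lt_c (by simp [h]))

theorem leap_blocks (q : Config n) :
    leap q.blocks =
      match q.shape with
      | .nested => q.b - 2
      | _ => (q.c - 2) + (q.c - q.b) := by
  have hbc := q.b_le_c
  have hcd := q.c_lt_d
  rw [leap, blockQuad_blocks]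
  cases q.shape <;> dsimp only
  omega

theorem skip_blocks (q : Config n) :
    skip q.blocks =
      match q.shape with
      | .nested => (q.d - q.a) + (q.c - q.b) - 2
      | _ => (q.b - q.a) + (q.d - q.c) - 2 := by
  have hab := q.a_lt_b
  have hbc := q.b_le_c
  have hcd := q.c_lt_d
  cases h : q.shape <;> simp only [blocks, h]
  case triple =>
    have heq := q.shape_eq_triple_iff.1 h
    rw [skip_triple hab (by omega)]
    omega
  case disjoint =>
    rw [skip_pair hab hcd (by omega) (by omega)]
    omega
  case nested =>
    have hlt := b_lt_c (q := q) (by simp [h])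
    rw [skip_pair (by omega) hlt hab.ne (by omega)]
    omega

theorem skip_blocks_dual (q : Config n) : skip q.dual.blocks = leap q.blocks := by
  have hab := q.a_lt_b
  have hbc := q.b_le_c
  have hcd := q.c_lt_d
  rw [skip_blocks, leap_blocks]
  cases h : q.shape <;> simp only [dual, h, Shape.dual]
  case triple =>
    have heq := q.shape_eq_triple_iff.1 h
    omega
  all_goals omega

theorem leap_blocks_dual (q : Config n) : leap q.dual.blocks = skip q.blocks := by
  rw [← skip_blocks_dual, dual_involutive]

theorem blockSizes_blocks_dual (q : Config n) : blockSizes q.dual.blocks = blockSizes q.blocks := by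
  rw [blockSizes_blocks, blockSizes_blocks, ← q.shape.sizes_dual, dual]

theorem blocks_injective : Function.Injective (blocks : Config n → Finset (Finset ℕ)) := by
  intro p q h
  have hlist : [p.a, p.b, p.c, p.d] = [q.a, q.b, q.c, q.d] := by
    rw [← nsList_blocks, ← nsList_blocks, h]
  simp only [List.cons.injEq, and_true] at hlist
  obtain ⟨ha, hb, hc, hd⟩ := hlist
  have hbd : q.b ≠ q.d := (q.b_le_c.trans_lt q.c_lt_d).ne
  have htriple : p.shape = .triple ↔ q.shape = .triple := by
    rw [p.shape_eq_triple_iff, q.shape_eq_triple_iff, hb, hc]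
  have hquad := congrArg (fun bs => (blockQuad bs).2.1) h
  have hshape : p.shape = q.shape := by
    simp only [blockQuad_blocks] at hquad
    cases hp : p.shape <;> cases hq : q.shape <;> simp_all
  exact Config.ext hshape ha hb hc hd

theorem exists_blocks_eq_triple {β : Finset ℕ} (hsub : β ⊆ Icc 1 n) (hβ : #β = 3) :
    ∃ q : Config n, q.blocks = {β} := by
  obtain ⟨a, b, d, hab, hbd, rfl⟩ := exists_lt_lt_eq_of_card_eq_three hβ
  have ha := mem_Icc.1 (hsub (show a ∈ {a, b, d} by simp))
  have hd := mem_Icc.1 (hsub (show d ∈ {a, b, d} by simp))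
  exact ⟨⟨.triple, a, b, b, d, ha.1, hab, le_rfl, hbd, hd.2, by simp⟩, rfl⟩

theorem exists_blocks_eq_pair {a b c d : ℕ} (hab : a < b) (hac : a < c) (hcd : c < d)
    (hsub : ∀ β ∈ ({{a, b}, {c, d}} : Finset (Finset ℕ)), β ⊆ Icc 1 n)
    (hdisj : Disjoint ({a, b} : Finset ℕ) {c, d})
    (hnc : IsNoncrossing {{a, b}, {c, d}}) :
    ∃ q : Config n, q.blocks = {{a, b}, {c, d}} := by
  simp only [mem_insert, mem_singleton, forall_eq_or_imp, forall_eq, insert_subset_iff,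
    singleton_subset_iff, mem_Icc] at hsub
  obtain ⟨⟨ha, hb⟩, -, hd⟩ := hsub
  have hbc : b ≠ c := by rintro rfl; simp at hdisj
  have hbd : b ≠ d := by rintro rfl; simp at hdisj
  obtain hlt | hgt := hbc.lt_or_gt
  · exact ⟨⟨.disjoint, a, b, c, d, ha.1, hab, hlt.le, hcd, hd.2, by simp [hbc]⟩, rfl⟩
  · have hdb : d < b := by
      refine hbd.lt_or_gt.resolve_left fun hbd' => pair_ne_pair (b := b) (d := d) hac.ne ?_ ?_
      · exact (hac.trans hcd).ne
      · exact hnc a c b d hac hgt hbd' _ (by simp) _ (by simp) (by simp) (by simp) (by simp)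
          (by simp)
    exact ⟨⟨.nested, a, c, d, b, ha.1, hac, hcd.le, hdb, hb.2, by simp [hcd.ne]⟩, rfl⟩

theorem exists_blocks_eq {bs : Finset (Finset ℕ)} (hsub : ∀ β ∈ bs, β ⊆ Icc 1 n)
    (hdisj : (bs : Set (Finset ℕ)).PairwiseDisjoint id) (hnc : IsNoncrossing bs)
    (h2 : ∀ β ∈ bs, 2 ≤ #β) (hexcess : excess bs = 2) : ∃ q : Config n, q.blocks = bs := by
  obtain ⟨β, rfl, hβ⟩ | ⟨β, γ, hne, rfl, hβ, hγ⟩ :=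
    eq_singleton_or_eq_pair_of_excess_eq_two h2 hexcess
  · exact exists_blocks_eq_triple (hsub β (mem_singleton_self β)) hβ
  · have hβγ : Disjoint β γ := hdisj (by simp) (by simp) hne
    obtain ⟨a, b, hab, rfl⟩ := exists_lt_eq_of_card_eq_two hβ
    obtain ⟨c, d, hcd, rfl⟩ := exists_lt_eq_of_card_eq_two hγ
    have hac : a ≠ c := by rintro rfl; simp at hβγ
    obtain hac | hca := hac.lt_or_gt
    · exact exists_blocks_eq_pair hab hac hcd hsub hβγ hnc
    · rw [pair_comm ({a, b} : Finset ℕ) {c, d}] at hsub hnc ⊢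
      exact exists_blocks_eq_pair hcd hca hab hsub hβγ.symm hnc

/-- The set partition with the non-singleton blocks of a given configuration. -/
def toSetPartition (q : Config n) : SetPartition n :=
  .ofBlocks q.blocks q.empty_notMem_blocks q.blocks_subset_Icc q.blocks_pairwiseDisjoint

theorem nsBlocks_toSetPartition (q : Config n) : nsBlocks q.toSetPartition.blocks = q.blocks :=
  (nsBlocks_addSingletons n q.blocks).trans q.nsBlocks_blocks

/-- The element of `NC(n,3)` with the non-singleton blocks of a given configuration. -/
def toNC (hn : 3 ≤ n) (q : Config n) : NC n 3 :=
  ⟨q.toSetPartition, by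
    rw [← isNoncrossing_nsBlocks, nsBlocks_toSetPartition]
    exact q.blocks_isNoncrossing, by
    have hsum := q.toSetPartition.card_blocks_add_excess
    rw [← excess_nsBlocks, nsBlocks_toSetPartition, excess_blocks] at hsum
    omega⟩

variable (hn : 3 ≤ n)

theorem nsBlocks_toNC (q : Config n) : nsBlocks (q.toNC hn).val.blocks = q.blocks :=
  q.nsBlocks_toSetPartition

theorem toNC_bijective : Function.Bijective (toNC hn) := by
  constructor
  · intro p q h
    apply blocks_injective
    rw [← nsBlocks_toNC hn p, ← nsBlocks_toNC hn q, h]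
  · intro π
    obtain ⟨q, hq⟩ : ∃ q : Config n, q.blocks = nsBlocks π.val.blocks :=
      exists_blocks_eq (fun β hβ => π.val.subset_Icc (mem_filter.1 hβ).1)
        (fun β hβ γ hγ => π.val.disjoint β (mem_filter.1 hβ).1 γ (mem_filter.1 hγ).1)
        (isNoncrossing_nsBlocks.2 π.prop.1) (fun β hβ => (mem_filter.1 hβ).2)
        (excess_nsBlocks_eq_two hn π)
    exact ⟨q, Subtype.ext (SetPartition.nsBlocks_injective ((nsBlocks_toNC hn q).trans hq))⟩

theorem skip_toNC (q : Config n) : skip (q.toNC hn).val.blocks = skip q.blocks := by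
  rw [← skip_nsBlocks (q.toNC hn).val.not_empty_mem, nsBlocks_toNC]

theorem leap_toNC (q : Config n) : leap (q.toNC hn).val.blocks = leap q.blocks := by
  rw [← leap_nsBlocks, nsBlocks_toNC]

theorem nsList_toNC (q : Config n) :
    nsList (q.toNC hn).val.blocks = [q.a, q.b, q.c, q.d] := by
  rw [← nsList_nsBlocks, nsBlocks_toNC, nsList_blocks]

theorem blockSizes_toNC_dual (q : Config n) :
    blockSizes (q.dual.toNC hn).val.blocks = blockSizes (q.toNC hn).val.blocks := by
  have hcard : #q.dual.blocks = #q.blocks := by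
    simpa [blockSizes] using congrArg Multiset.card q.blockSizes_blocks_dual
  rw [blockSizes_eq_add_replicate (SetPartition.not_empty_mem _),
    blockSizes_eq_add_replicate (SetPartition.not_empty_mem _), nsBlocks_toNC, nsBlocks_toNC,
    blockSizes_blocks_dual, hcard, (q.toNC hn).prop.2, (q.dual.toNC hn).prop.2]

end Config

/-- For every `n ≥ 3` there is a bijection `ψ` of `NC(n,3)` exchanging the skip and leap
statistics, preserving the multiset of block sizes, and acting on the elements
`a < b ≤ c < d` of the non-singleton blocks (listed in increasing order, the middle
element of a size-3 block listed twice) by `(a,b,c,d) ↦ (d-c, b+d-a-c, d-a, d)`. -/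
theorem exists_skip_leap_exchanging_bijection (n : ℕ) (hn : 3 ≤ n) :
    ∃ ψ : NC n 3 → NC n 3, Function.Bijective ψ ∧
      ∀ π : NC n 3,
        skip (ψ π).val.blocks = leap π.val.blocks ∧
        leap (ψ π).val.blocks = skip π.val.blocks ∧
        blockSizes (ψ π).val.blocks = blockSizes π.val.blocks ∧
        (∀ a b c d : ℕ, a < b → b ≤ c → c < d →
          nsList π.val.blocks = [a, b, c, d] →
          nsList (ψ π).val.blocks = [d - c, b + d - a - c, d - a, d]) := by
  let e : Config n ≃ NC n 3 := Equiv.ofBijective _ (Config.toNC_bijective hn)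
  have he : ∀ q, e q = q.toNC hn := fun _ => rfl
  have hdual : Function.Bijective (Config.dual (n := n)) := Config.dual_involutive.bijective
  refine ⟨e ∘ Config.dual ∘ e.symm, e.bijective.comp (hdual.comp e.symm.bijective), fun π => ?_⟩
  obtain ⟨q, rfl⟩ := e.surjective π
  simp only [Function.comp_apply, Equiv.symm_apply_apply]
  simp only [he]
  refine ⟨?_, ?_, q.blockSizes_toNC_dual hn, ?_⟩
  · rw [Config.skip_toNC, Config.leap_toNC, Config.skip_blocks_dual]
  · rw [Config.skip_toNC, Config.leap_toNC, Config.leap_blocks_dual]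
  · rintro a b c d - - - hlist
    rw [Config.nsList_toNC] at hlist ⊢
    obtain ⟨rfl, rfl, rfl, rfl⟩ : q.a = a ∧ q.b = b ∧ q.c = c ∧ q.d = d := by simpa using hlist
    rfl

end QtN
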